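/- In a d-choice allocation of n objects on n nodes with random design and i.i.d. demands, for any positive integers u_1, …, u_v with u_1 + ⋯ + u_v = n, the robustness (over both the random allocation and the random demands) satisfies P ≤ ∏_{i=1}^{v} E[ F_{u_i}(m · N_{n,d,u_i}) ], where N_{n,d,u} = |D_1 ∪ ⋯ ∪ D_u| for D_1,…,D_u independent uniformly random d-element subsets of the n nodes, and F_u is the CDF of the sum of u i.i.d. demands. -/

import Mathlib

/-!
If a demand vector is servable, the total demand of any group of objects is carried by the nodes
storing some object of the group, each with load at most `m`; it is therefore at most `m` times the
number of those nodes. Partition the objects into blocks: servability implies one such capacity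
constraint per block, and the constraints of different blocks involve disjoint sets of coordinates
of both the allocation and the demands. They are therefore independent, and the probability that
all of them hold is a product over the blocks.
-/

open MeasureTheory Finset
open scoped ENNReal

/-- A demand vector `ρ` is `m`-servable for the storage allocation `C` (object `i` is
stored on the set of nodes `C i`) if the demands can be split across service choices
so that every node carries load at most `m`. -/
def Servable {n k : ℕ} (C : Fin k → Finset (Fin n)) (m : ℝ) (ρ : Fin k → ℝ) : Prop :=
  ∃ x : Fin k → Fin n → ℝ,
    (∀ i u, 0 ≤ x i u) ∧
    (∀ i u, u ∉ C i → x i u = 0) ∧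
    (∀ i, ∑ u ∈ C i, x i u = ρ i) ∧
    (∀ u : Fin n, ∑ i ∈ univ.filter (fun i => u ∈ C i), x i u ≤ m)

section Capacity

variable {n k : ℕ} {C : Fin k → Finset (Fin n)} {m : ℝ} {ρ : Fin k → ℝ}

theorem Servable.sum_le_mul_card_biUnion (h : Servable C m ρ) (T : Finset (Fin k)) :
    ∑ i ∈ T, ρ i ≤ m * #(T.biUnion C) := by
  obtain ⟨x, x_nonneg, x_eq_zero, x_sum, x_load⟩ := h
  have sum_coverage : ∀ i ∈ T, ρ i = ∑ w ∈ T.biUnion C, x i w := fun i hi =>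
    (x_sum i).symm.trans
      (sum_subset (subset_biUnion_of_mem C hi) fun w _ hw => x_eq_zero i w hw)
  have load_le (w : Fin n) : ∑ i ∈ T, x i w ≤ m := calc
    ∑ i ∈ T, x i w ≤ ∑ i, x i w :=
      sum_le_sum_of_subset_of_nonneg (subset_univ T) fun i _ _ => x_nonneg i w
    _ = ∑ i with w ∈ C i, x i w :=
      (sum_filter_of_ne fun i _ hi => not_imp_comm.1 (x_eq_zero i w) hi).symm
    _ ≤ m := x_load w
  calc ∑ i ∈ T, ρ i = ∑ i ∈ T, ∑ w ∈ T.biUnion C, x i w := sum_congr rfl sum_coverage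
    _ = ∑ w ∈ T.biUnion C, ∑ i ∈ T, x i w := sum_comm
    _ ≤ #(T.biUnion C) • m := sum_le_card_nsmul _ _ _ fun w _ => load_le w
    _ = m * #(T.biUnion C) := by rw [nsmul_eq_mul, mul_comm]

/-- The event that the total demand of the objects stored on the sets `D j` is at most the joint
capacity of the nodes these sets cover, when every node has capacity `m`. For i.i.d. demands of
`u` objects its probability is `F_u (m * |⋃ j, D j|)`. -/
def capacityEvent {κ : Type*} [Fintype κ] (D : κ → Finset (Fin n)) (m : ℝ) : Set (κ → ℝ) :=
  {w | ∑ j, w j ≤ m * #(univ.biUnion D)}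

theorem Servable.comp_mem_capacityEvent {κ : Type*} [Fintype κ] (h : Servable C m ρ)
    {f : κ → Fin k} (hf : Function.Injective f) :
    (fun j => ρ (f j)) ∈ capacityEvent (fun j => C (f j)) m := by
  have block_le := h.sum_le_mul_card_biUnion (univ.image f)
  rwa [sum_image hf.injOn, image_biUnion] at block_le

end Capacity

section Blocks

variable {ι β : Type*} {κ : β → Type*} [Fintype ι] [Fintype β] [∀ i, Fintype (κ i)]
  (e : (Σ i, κ i) ≃ ι)

theorem measurePreserving_blocks {X : Type*} [MeasurableSpace X] (μ : ι → Measure X)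
    [∀ i, IsProbabilityMeasure (μ i)] :
    MeasurePreserving
      ((MeasurableEquiv.piCongrLeft (fun _ => X) e).symm.trans
        (MeasurableEquiv.piCurry fun i (_ : κ i) => X))
      (Measure.pi μ) (Measure.pi fun i => Measure.pi fun j => μ (e ⟨i, j⟩)) := by
  have curry : MeasurePreserving (MeasurableEquiv.piCurry fun i (_ : κ i) => X)
      (Measure.pi fun q => μ (e q)) (Measure.pi fun i => Measure.pi fun j => μ (e ⟨i, j⟩)) := by
    refine ⟨MeasurableEquiv.measurable _, ?_⟩
    simpa only [Measure.infinitePi_eq_pi] using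
      Measure.infinitePi_map_piCurry fun i j => μ (e ⟨i, j⟩)
  exact curry.comp ((measurePreserving_piCongrLeft μ e).symm _)

theorem pi_setOf_forall_block_mem {X : Type*} [MeasurableSpace X] (μ : ι → Measure X)
    [∀ i, IsProbabilityMeasure (μ i)] (A : ∀ i, Set (κ i → X)) :
    Measure.pi μ {ρ | ∀ i, (fun j => ρ (e ⟨i, j⟩)) ∈ A i} =
      ∏ i, Measure.pi (fun j => μ (e ⟨i, j⟩)) (A i) := by
  rw [← Measure.pi_pi, ← (measurePreserving_blocks e μ).measure_preimage_equiv]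
  congr 1
  ext ρ
  exact Set.mem_univ_pi.symm

theorem sum_prod_blocks {α : Type*} [Fintype α] [DecidableEq ι] [∀ i, DecidableEq (κ i)]
    {R : Type*} [CommSemiring R] (g : ∀ i, (κ i → α) → R) :
    ∑ C : ι → α, ∏ i, g i (fun j => C (e ⟨i, j⟩)) = ∏ i, ∑ D, g i D := by
  classical
  rw [prod_univ_sum, Fintype.piFinset_univ]
  exact Fintype.sum_equiv ((e.symm.arrowCongr (Equiv.refl α)).trans (Equiv.piCurry fun _ _ => α))
    _ _ fun C => rfl

end Blocks

section ProductExpectation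

variable {ι α : Type*} [Fintype ι] [DecidableEq ι] [Fintype α]

/-- The expectation of `f C` when the values `C i` are drawn independently, `C i` with law `p i`.
It is written as a finite sum, so that `α` needs no measurable structure. -/
noncomputable def productExpectation (p : ι → PMF α) (f : (ι → α) → ℝ≥0∞) : ℝ≥0∞ :=
  ∑ C : ι → α, (∏ i, p i (C i)) * f C

theorem productExpectation_mono (p : ι → PMF α) {f g : (ι → α) → ℝ≥0∞} (h : ∀ C, f C ≤ g C) :
    productExpectation p f ≤ productExpectation p g :=
  sum_le_sum fun C _ => mul_le_mul_right (h C) _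

theorem productExpectation_prod_blocks {β : Type*} {κ : β → Type*} [Fintype β]
    [∀ i, Fintype (κ i)] [∀ i, DecidableEq (κ i)] (e : (Σ i, κ i) ≃ ι) (p : ι → PMF α)
    (g : ∀ i, (κ i → α) → ℝ≥0∞) :
    productExpectation p (fun C => ∏ i, g i fun j => C (e ⟨i, j⟩)) =
      ∏ i, productExpectation (fun j => p (e ⟨i, j⟩)) (g i) := by
  simp only [productExpectation]
  rw [← sum_prod_blocks e]
  refine sum_congr rfl fun C _ => ?_
  rw [prod_mul_distrib, ← e.prod_comp, Fintype.prod_sigma]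

theorem productExpectation_uniformOfFinset {s : Finset α} (hs : s.Nonempty) (f : (ι → α) → ℝ≥0∞) :
    productExpectation (fun _ => PMF.uniformOfFinset s hs) f =
      (∑ C ∈ Fintype.piFinset fun _ : ι => s, f C) / (#s : ℝ≥0∞) ^ Fintype.card ι := by
  have weight_eq {C : ι → α} (hC : C ∈ Fintype.piFinset fun _ => s) :
      ∏ i, PMF.uniformOfFinset s hs (C i) = ((#s : ℝ≥0∞) ^ Fintype.card ι)⁻¹ := by
    rw [Fintype.mem_piFinset] at hC
    simp only [PMF.uniformOfFinset_apply_of_mem hs (hC _), prod_const, card_univ,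
      ENNReal.inv_pow]
  have weight_eq_zero {C : ι → α} (hC : C ∉ Fintype.piFinset fun _ => s) :
      ∏ i, PMF.uniformOfFinset s hs (C i) = 0 := by
    obtain ⟨i, hi⟩ := not_forall.1 (mt Fintype.mem_piFinset.2 hC)
    exact prod_eq_zero (mem_univ i) (PMF.uniformOfFinset_apply_of_notMem hs hi)
  calc productExpectation (fun _ => PMF.uniformOfFinset s hs) f
      = ∑ C ∈ Fintype.piFinset fun _ : ι => s, (∏ i, PMF.uniformOfFinset s hs (C i)) * f C :=
        (sum_subset (subset_univ _) fun C _ hC => by rw [weight_eq_zero hC, zero_mul]).symm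
    _ = ∑ C ∈ Fintype.piFinset fun _ : ι => s, ((#s : ℝ≥0∞) ^ Fintype.card ι)⁻¹ * f C :=
        sum_congr rfl fun C hC => by rw [weight_eq hC]
    _ = (∑ C ∈ Fintype.piFinset fun _ : ι => s, f C) / (#s : ℝ≥0∞) ^ Fintype.card ι := by
        rw [← mul_sum, mul_comm, div_eq_mul_inv]

end ProductExpectation

section Robustness

variable {n : ℕ}

/-- The probability that the demands are `m`-servable, when object `i` is stored on a random set
of law `p i` and has a random demand of law `μ i`, all of these being independent. -/
noncomputable def robustness {k : ℕ} (p : Fin k → PMF (Finset (Fin n))) (μ : Fin k → Measure ℝ)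
    (m : ℝ) : ℝ≥0∞ :=
  productExpectation p fun C => Measure.pi μ {ρ | Servable C m ρ}

/-- The probability of `capacityEvent D m` for random sets `D j` of law `p j` and demands of
law `μ j`, all independent. For `u` objects with i.i.d. demands and uniform `d`-subsets of the nodes
this is `E[F_u (m * N_{n,d,u})]`. -/
noncomputable def capacityProb {κ : Type*} [Fintype κ] [DecidableEq κ]
    (p : κ → PMF (Finset (Fin n))) (μ : κ → Measure ℝ) (m : ℝ) : ℝ≥0∞ :=
  productExpectation p fun D => Measure.pi μ (capacityEvent D m)

theorem pi_setOf_servable_le {k : ℕ} {β : Type*} {κ : β → Type*} [Fintype β] [∀ i, Fintype (κ i)]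
    (e : (Σ i, κ i) ≃ Fin k) (C : Fin k → Finset (Fin n)) (μ : Fin k → Measure ℝ)
    [∀ i, IsProbabilityMeasure (μ i)] (m : ℝ) :
    Measure.pi μ {ρ | Servable C m ρ} ≤
      ∏ i, Measure.pi (fun j => μ (e ⟨i, j⟩)) (capacityEvent (fun j => C (e ⟨i, j⟩)) m) := by
  rw [← pi_setOf_forall_block_mem e μ]
  exact measure_mono fun ρ hρ i =>
    hρ.comp_mem_capacityEvent (e.injective.comp sigma_mk_injective)

theorem stmt18_general {k : ℕ} {β : Type*} {κ : β → Type*} [Fintype β]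
    [∀ i, Fintype (κ i)] [∀ i, DecidableEq (κ i)] (e : (Σ i, κ i) ≃ Fin k)
    (p : Fin k → PMF (Finset (Fin n))) (μ : Fin k → Measure ℝ)
    [∀ i, IsProbabilityMeasure (μ i)] (m : ℝ) :
    robustness p μ m ≤
      ∏ i, capacityProb (fun j => p (e ⟨i, j⟩)) (fun j => μ (e ⟨i, j⟩)) m :=
  calc robustness p μ m
      ≤ productExpectation p fun C =>
          ∏ i, Measure.pi (fun j => μ (e ⟨i, j⟩)) (capacityEvent (fun j => C (e ⟨i, j⟩)) m) :=
        productExpectation_mono p fun C => pi_setOf_servable_le e C μ m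
    _ = ∏ i, capacityProb (fun j => p (e ⟨i, j⟩)) (fun j => μ (e ⟨i, j⟩)) m :=
        productExpectation_prod_blocks e p
          fun i D => Measure.pi (fun j => μ (e ⟨i, j⟩)) (capacityEvent D m)

end Robustness

/-- Random-design upper bound. The robustness over both the random allocation (each of the
`n` service-choice sets drawn uniformly among `d`-subsets of the `n` nodes, written as an
average over all such allocations) and the i.i.d. demands is at most
`∏_{i=1}^{v} E[F_{u_i}(m · N_{n,d,u_i})]`, for any positive `u_1, …, u_v` summing to `n`.
Here `N_{n,d,u} = |D_1 ∪ ⋯ ∪ D_u|` for independent uniform `d`-subsets `D_1, …, D_u`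
(the occupancy of random allocation with `d`-complexes), and each expectation is written
as an average over all `u_i`-tuples of `d`-subsets. -/
theorem stmt18 (n d : ℕ) (hn : 0 < n) (hd : 1 ≤ d) (hdn : d ≤ n)
    (m : ℝ) (hm0 : 0 < m) (hm1 : m ≤ 1)
    (μ : Measure ℝ) [IsProbabilityMeasure μ] (hμ : μ (Set.Iio 0) = 0)
    (v : ℕ) (u : Fin v → ℕ) (hu : ∀ i, 0 < u i) (husum : ∑ i, u i = n) :
    (∑ C ∈ Fintype.piFinset (fun _ : Fin n => (univ : Finset (Fin n)).powersetCard d),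
        (Measure.pi fun _ : Fin n => μ) {ρ | Servable C m ρ}) /
        ((n.choose d : ℝ≥0∞) ^ n) ≤
      ∏ i : Fin v,
        (∑ D ∈ Fintype.piFinset (fun _ : Fin (u i) => (univ : Finset (Fin n)).powersetCard d),
            (Measure.pi fun _ : Fin (u i) => μ)
              {w | ∑ j, w j ≤ m * (((univ : Finset (Fin (u i))).biUnion D).card : ℝ)}) /
          ((n.choose d : ℝ≥0∞) ^ (u i)) := by
  simpa only [robustness, capacityProb, capacityEvent, productExpectation_uniformOfFinset,
      card_powersetCard, card_univ, Fintype.card_fin] using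
    stmt18_general (finSigmaFinEquiv.trans (finCongr husum))
      (fun _ => .uniformOfFinset _ (powersetCard_nonempty.2 (hdn.trans_eq (card_fin n).symm)))
      (fun _ => μ) m
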